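/- If W ⊆ E_3 is a 2-dimensional subspace none of whose nonzero elements has a 2-element representative, then there exists a unique partition of I = {1,…,8} into four 2-element blocks P_1, P_2, P_3, P_4 such that the three nonzero elements of W are exactly the classes [P_i ∪ P_j] for 1 ≤ i < j ≤ 4 (note [P_1 ∪ P_2] = [P_3 ∪ P_4], etc.); conversely, every partition of I into four 2-element blocks determines such a 2-dimensional subspace. Hence these subspaces (type II.1) are in bijection with the 105 partitions of an 8-element set into four pairs. -/

import Mathlib

/-!
A nonzero class in `E3` has an even representative of size 2, 4 or 6, unique up to complement, so
a class without 2-element representative is `[S]` with `S` of size 4 (`exists_cls_four`). If `W`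
is a plane with nonzero vectors `[S]`, `[T]`, `[S ∆ T]`, all of this kind, then `S ∆ T` has size 4,
so `S` and `T` meet in exactly two points (`card_inter`), and `S ∩ T`, `S \ T`, `T \ S` and
`(S ∪ T)ᶜ` are the four pairs sought (`isQuad_of_card_inter`). Conversely, for a partition into
pairs `A, B, C, D` the classes `[A ∪ B]`, `[A ∪ C]`, `[A ∪ D]` sum to zero, and as classes of
4-element sets they are nonzero without 2-element representative, so they are the nonzero vectors
of a plane of the required kind (`exists_plane`).

The partition is unique because its blocks can be read off from the three classes: they are the
pairs that no 4-element representative separates (`mem_iff_of_isPairPartition`). A plane is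
determined by its nonzero vectors, so planes and partitions correspond bijectively
(`card_planes`). The partitions are counted by choosing the partner of one point and recursing on
the remaining points, which gives `7 * 5 * 3 * 1 = 105` (`card_matchings_succ`,
`card_matchings`).
-/

open Finset Submodule

noncomputable section

def sumMap : (Fin 8 → ZMod 2) →ₗ[ZMod 2] ZMod 2 where
  toFun v := ∑ i, v i
  map_add' v w := by simp [Finset.sum_add_distrib]
  map_smul' c v := by simp [Finset.mul_sum]

def V3 : Submodule (ZMod 2) (Fin 8 → ZMod 2) := LinearMap.ker sumMap

@[simp] lemma sumMap_apply (v : Fin 8 → ZMod 2) : sumMap v = ∑ i, v i := rfl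

lemma mem_V3 (v : Fin 8 → ZMod 2) : v ∈ V3 ↔ ∑ i, v i = 0 := by
  simp [V3, LinearMap.mem_ker]

def onesV : V3 := ⟨fun _ => 1, by rw [mem_V3]; decide⟩

abbrev E3 := V3 ⧸ span (ZMod 2) {onesV}

def indFun (S : Finset (Fin 8)) : Fin 8 → ZMod 2 := fun i => if i ∈ S then 1 else 0

open Classical in
def cls (S : Finset (Fin 8)) : E3 :=
  if h : indFun S ∈ V3 then Submodule.Quotient.mk (⟨indFun S, h⟩ : V3) else 0

/-- `x` has a `k`-element representative -/
def hasRep (k : ℕ) (x : E3) : Prop := ∃ S : Finset (Fin 8), S.card = k ∧ cls S = x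

/-- A partition of `I = {1,…,8}` into four 2-element blocks. -/
def IsPairPartition (P : Finset (Finset (Fin 8))) : Prop :=
  P.card = 4 ∧ (∀ B ∈ P, B.card = 2) ∧
  (∀ B₁ ∈ P, ∀ B₂ ∈ P, B₁ ≠ B₂ → Disjoint B₁ B₂) ∧ P.sup id = Finset.univ

/-! ### Classes of even subsets -/

lemma indFun_mem {S : Finset (Fin 8)} : indFun S ∈ V3 ↔ Even S.card := by
  rw [mem_V3, ← ZMod.natCast_eq_zero_iff_even]
  simp [indFun]

lemma cls_of_even {S : Finset (Fin 8)} (h : Even S.card) :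
    cls S = Submodule.Quotient.mk (⟨indFun S, indFun_mem.2 h⟩ : V3) :=
  dif_pos _

lemma indFun_add (S T : Finset (Fin 8)) : indFun S + indFun T = indFun (symmDiff S T) := by
  ext i
  by_cases hS : i ∈ S <;> by_cases hT : i ∈ T <;>
    simp [indFun, Finset.mem_symmDiff, hS, hT, CharTwo.add_self_eq_zero]

lemma even_symmDiff {S T : Finset (Fin 8)} (hS : Even S.card) (hT : Even T.card) :
    Even (symmDiff S T).card := by
  rw [← indFun_mem, ← indFun_add]
  exact V3.add_mem (indFun_mem.2 hS) (indFun_mem.2 hT)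

lemma cls_add {S T : Finset (Fin 8)} (hS : Even S.card) (hT : Even T.card) :
    cls S + cls T = cls (symmDiff S T) := by
  rw [cls_of_even hS, cls_of_even hT, cls_of_even (even_symmDiff hS hT),
    ← Submodule.Quotient.mk_add]
  congr 1
  exact Subtype.ext (indFun_add S T)

lemma cls_eq_zero {S : Finset (Fin 8)} (hS : Even S.card) :
    cls S = 0 ↔ S = ∅ ∨ S = univ := by
  rw [cls_of_even hS, Submodule.Quotient.mk_eq_zero, mem_span_singleton]
  constructor
  · rintro ⟨c, hc⟩
    have h (i : Fin 8) : c = indFun S i := by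
      have := congrFun (congrArg Subtype.val hc) i
      simpa [onesV] using this
    have hc' : c = 0 ∨ c = 1 := by clear h hc; revert c; decide
    rcases hc' with rfl | rfl
    · exact .inl (Finset.eq_empty_iff_forall_notMem.2 fun i hi => by
        simpa [indFun, hi] using h i)
    · refine .inr (Finset.eq_univ_iff_forall.2 fun i => ?_)
      by_contra hi
      simpa [indFun, hi] using h i
  · rintro (rfl | rfl)
    · exact ⟨0, Subtype.ext (by ext i; simp [indFun])⟩
    · exact ⟨1, Subtype.ext (by ext i; simp [indFun, onesV])⟩

lemma cls_eq_cls {S T : Finset (Fin 8)} (hS : Even S.card) (hT : Even T.card) :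
    cls S = cls T ↔ S = T ∨ S = Tᶜ := by
  rw [← sub_eq_zero, ZModModule.sub_eq_add, cls_add hS hT, cls_eq_zero (even_symmDiff hS hT)]
  refine or_congr symmDiff_eq_bot ?_
  rw [← Finset.top_eq_univ, symmDiff_eq_top]
  exact ⟨fun h => h.eq_compl, fun h => h ▸ isCompl_compl.symm⟩

lemma exists_cls (x : E3) : ∃ S : Finset (Fin 8), Even S.card ∧ cls S = x := by
  obtain ⟨v, rfl⟩ := Submodule.Quotient.mk_surjective _ x
  have hv : indFun {i | v.1 i = 1} = v.1 := by
    ext i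
    have : v.1 i = 0 ∨ v.1 i = 1 := by generalize v.1 i = c; revert c; decide
    rcases this with h | h <;> simp [indFun, h]
  have he : Even (Finset.card {i | v.1 i = 1}) := by
    rw [← indFun_mem, hv]; exact v.2
  refine ⟨_, he, ?_⟩
  rw [cls_of_even he]
  congr 1
  exact Subtype.ext hv

/-- A class with no 2-element representative is the class of a 4-element set: the other even
sizes are `0` and `8`, which give the zero class, and `6`, which is complementary to `2`. -/
lemma exists_cls_four {x : E3} (h0 : x ≠ 0) (h2 : ¬ hasRep 2 x) :
    ∃ S : Finset (Fin 8), S.card = 4 ∧ cls S = x := by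
  obtain ⟨S, hS, rfl⟩ := exists_cls x
  refine ⟨S, ?_, rfl⟩
  have hle : S.card ≤ 8 := by simpa using S.card_le_univ
  have h0' : S.card ≠ 0 := fun h => h0 ((cls_eq_zero hS).2 (.inl (card_eq_zero.1 h)))
  have h8 : S.card ≠ 8 := fun h => h0 ((cls_eq_zero hS).2 (.inr (by
    rw [← card_eq_iff_eq_univ]; simpa using h)))
  have h2' : S.card ≠ 2 := fun h => h2 ⟨S, h, rfl⟩
  have h6 : S.card ≠ 6 := fun h => by
    have hc : Sᶜ.card = 2 := by rw [card_compl, h]; rfl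
    exact h2 ⟨Sᶜ, hc, (cls_eq_cls (by rw [hc]; decide) hS).2 (.inr rfl)⟩
  obtain ⟨k, hk⟩ := hS
  omega

/-- If `[S] + [T] = [S ∆ T]` is nonzero without 2-element representative, then `S ∆ T` has four
elements, which for 4-element sets `S`, `T` leaves two points in `S ∩ T`. -/
lemma card_inter {S T : Finset (Fin 8)} (hS : S.card = 4) (hT : T.card = 4)
    (h0 : cls S + cls T ≠ 0) (h2 : ¬ hasRep 2 (cls S + cls T)) : (S ∩ T).card = 2 := by
  have eS : Even S.card := by rw [hS]; decide
  have eT : Even T.card := by rw [hT]; decide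
  rw [cls_add eS eT] at h0 h2
  obtain ⟨U, hU, h⟩ := exists_cls_four h0 h2
  have hUc : Uᶜ.card = 4 := by rw [card_compl, hU]; rfl
  have hD : (symmDiff S T).card = 4 := by
    rcases (cls_eq_cls (by rw [hU]; decide) (even_symmDiff eS eT)).1 h with h | h
    · rw [← h, hU]
    · rw [← compl_compl (symmDiff S T), ← h, hUc]
  rw [symmDiff, sup_eq_union, card_union_of_disjoint disjoint_sdiff_sdiff] at hD
  have h1 := card_sdiff_add_card_inter S T
  have h3 := card_sdiff_add_card_inter T S
  rw [inter_comm] at h3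
  omega

/-! ### Partitions into four pairs -/

/-- The classes `[B₁ ∪ B₂]` of unions of two distinct blocks of `P`. -/
def pairClasses (P : Finset (Finset (Fin 8))) : Set E3 :=
  {x | ∃ B₁ ∈ P, ∃ B₂ ∈ P, B₁ ≠ B₂ ∧ x = cls (B₁ ∪ B₂)}

/-- `A, B, C, D` are the blocks, listed in some order, of a partition into four pairs. -/
structure IsQuad (A B C D : Finset (Fin 8)) : Prop where
  cA : A.card = 2
  cB : B.card = 2
  cC : C.card = 2
  cD : D.card = 2
  AB : Disjoint A B
  AC : Disjoint A C
  AD : Disjoint A D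
  BC : Disjoint B C
  BD : Disjoint B D
  CD : Disjoint C D
  cover : A ∪ B ∪ C ∪ D = univ

lemma ne_of_disjoint_pair {A B : Finset (Fin 8)} (hA : A.card = 2) (h : Disjoint A B) :
    A ≠ B := by
  rintro rfl
  simp_all

lemma IsPairPartition.exists_quad {P : Finset (Finset (Fin 8))} (h : IsPairPartition P) :
    ∃ A B C D, P = {A, B, C, D} ∧ IsQuad A B C D := by
  obtain ⟨h4, h2, hd, hs⟩ := h
  obtain ⟨A, P', hA, rfl, h3⟩ := card_eq_succ.1 h4
  obtain ⟨B, C, D, hBC, hBD, hCD, rfl⟩ := card_eq_three.1 h3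
  simp only [mem_insert, Finset.mem_singleton, not_or] at hA
  refine ⟨A, B, C, D, rfl, ?_⟩
  constructor
  case cover => simpa [union_assoc] using hs
  case AB => exact hd _ (by simp) _ (by simp) hA.1
  case AC => exact hd _ (by simp) _ (by simp) hA.2.1
  case AD => exact hd _ (by simp) _ (by simp) hA.2.2
  case BC => exact hd _ (by simp) _ (by simp) hBC
  case BD => exact hd _ (by simp) _ (by simp) hBD
  case CD => exact hd _ (by simp) _ (by simp) hCD
  all_goals exact h2 _ (by simp)

namespace IsQuad

variable {A B C D : Finset (Fin 8)}

lemma isPairPartition (h : IsQuad A B C D) : IsPairPartition {A, B, C, D} := by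
  have nAB := ne_of_disjoint_pair h.cA h.AB
  have nAC := ne_of_disjoint_pair h.cA h.AC
  have nAD := ne_of_disjoint_pair h.cA h.AD
  have nBC := ne_of_disjoint_pair h.cB h.BC
  have nBD := ne_of_disjoint_pair h.cB h.BD
  have nCD := ne_of_disjoint_pair h.cC h.CD
  refine ⟨?_, ?_, ?_, ?_⟩
  · simp [*]
  · simp [h.cA, h.cB, h.cC, h.cD]
  · simp [h.AB, h.AC, h.AD, h.BC, h.BD, h.CD, h.AB.symm, h.AC.symm, h.AD.symm, h.BC.symm,
      h.BD.symm, h.CD.symm]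
  · simpa [union_assoc] using h.cover

lemma swapBC (h : IsQuad A B C D) : IsQuad A C B D :=
  ⟨h.cA, h.cC, h.cB, h.cD, h.AC, h.AB, h.AD, h.BC.symm, h.CD, h.BD, by
    rw [union_right_comm A C B]; exact h.cover⟩

lemma swapBD (h : IsQuad A B C D) : IsQuad A D C B :=
  ⟨h.cA, h.cD, h.cC, h.cB, h.AD, h.AC, h.AB, h.CD.symm, h.BD.symm, h.BC.symm, by
    rw [← h.cover]; ext; simp; tauto⟩

lemma cUnion (h : IsQuad A B C D) : (A ∪ B).card = 4 := by
  rw [card_union_of_disjoint h.AB, h.cA, h.cB]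

lemma compl_eq (h : IsQuad A B C D) : (A ∪ B)ᶜ = C ∪ D := by
  have hd : Disjoint (A ∪ B) (C ∪ D) := by
    simp [disjoint_union_left, disjoint_union_right, h.AC, h.AD, h.BC, h.BD]
  refine (IsCompl.compl_eq ⟨hd, ?_⟩)
  rw [codisjoint_iff, sup_eq_union, ← union_assoc]
  exact h.cover

lemma cUnion' (h : IsQuad A B C D) : (C ∪ D).card = 4 := by
  rw [card_union_of_disjoint h.CD, h.cC, h.cD]

lemma cls_compl (h : IsQuad A B C D) : cls (C ∪ D) = cls (A ∪ B) :=
  (cls_eq_cls (by rw [h.cUnion']; decide) (by rw [h.cUnion]; decide)).2 (.inr h.compl_eq.symm)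

lemma cls_add_cls (h : IsQuad A B C D) : cls (A ∪ B) + cls (A ∪ C) = cls (A ∪ D) := by
  rw [cls_add (by rw [h.cUnion]; decide) (by rw [h.swapBC.cUnion]; decide),
    ← h.swapBD.cls_compl]
  congr 1
  ext i
  have h1 : i ∈ A → i ∉ B := fun hi => Finset.disjoint_left.1 h.AB hi
  have h2 : i ∈ A → i ∉ C := fun hi => Finset.disjoint_left.1 h.AC hi
  have h3 : i ∈ B → i ∉ C := fun hi => Finset.disjoint_left.1 h.BC hi
  simp only [mem_symmDiff, Finset.mem_union]
  tauto

lemma pairClasses_eq (h : IsQuad A B C D) :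
    pairClasses {A, B, C, D} = {cls (A ∪ B), cls (A ∪ C), cls (A ∪ D)} := by
  have nAB := ne_of_disjoint_pair h.cA h.AB
  have nAC := ne_of_disjoint_pair h.cA h.AC
  have nAD := ne_of_disjoint_pair h.cA h.AD
  have e1 := h.cls_compl
  have e2 := h.swapBC.cls_compl
  have e3 := h.swapBD.cls_compl
  have e1' := e1; have e2' := e2; have e3' := e3
  rw [union_comm] at e1' e2' e3'
  ext x
  simp only [pairClasses, Set.mem_ofPred_eq, Set.mem_insert_iff, Set.mem_singleton_iff]
  constructor
  · rintro ⟨X, hX, Y, hY, hne, rfl⟩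
    simp only [mem_insert, Finset.mem_singleton] at hX hY
    rcases hX with rfl | rfl | rfl | rfl <;> rcases hY with rfl | rfl | rfl | rfl <;>
      first
      | exact absurd rfl hne
      | simp [*]
      | (rw [union_comm]; simp)
  · rintro (rfl | rfl | rfl)
    · exact ⟨A, by simp, B, by simp, nAB, rfl⟩
    · exact ⟨A, by simp, C, by simp, nAC, rfl⟩
    · exact ⟨A, by simp, D, by simp, nAD, rfl⟩

end IsQuad

/-- The partition cut out by two 4-element sets meeting in two points. -/
lemma isQuad_of_card_inter {S T : Finset (Fin 8)} (hS : S.card = 4) (hT : T.card = 4)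
    (h : (S ∩ T).card = 2) : IsQuad (S ∩ T) (S \ T) (T \ S) (S ∪ T)ᶜ := by
  have h1 := card_sdiff_add_card_inter S T
  have h2 := card_sdiff_add_card_inter T S
  have h3 := card_union_add_card_inter S T
  rw [inter_comm] at h2
  constructor
  case cA => exact h
  case cB => omega
  case cC => omega
  case cD => rw [card_compl, Fintype.card_fin]; omega
  case cover => ext; simp; tauto
  all_goals
    rw [Finset.disjoint_left]
    intro i
    simp
    try tauto

/-! ### Planes over the field with two elements -/

lemma mem_span_pair_two {a b x : E3} :
    x ∈ span (ZMod 2) {a, b} ↔ x = 0 ∨ x = a ∨ x = b ∨ x = a + b := by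
  have h2 (c : ZMod 2) : c = 0 ∨ c = 1 := by revert c; decide
  rw [mem_span_pair]
  constructor
  · rintro ⟨c, d, rfl⟩
    rcases h2 c with rfl | rfl <;> rcases h2 d with rfl | rfl <;> simp
  · rintro (rfl | rfl | rfl | rfl)
    · exact ⟨0, 0, by simp⟩
    · exact ⟨1, 0, by simp⟩
    · exact ⟨0, 1, by simp⟩
    · exact ⟨1, 1, by simp⟩

lemma add_ne_zero_of_ne {a b : E3} (h : a ≠ b) : a + b ≠ 0 := by
  rw [← ZModModule.sub_eq_add]
  exact sub_ne_zero.2 h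

lemma exists_basis_plane {W : Submodule (ZMod 2) E3} (hW : Module.finrank (ZMod 2) W = 2) :
    ∃ a b : E3, a ≠ 0 ∧ b ≠ 0 ∧ a ≠ b ∧ W = span (ZMod 2) {a, b} := by
  let e := Module.finBasisOfFinrankEq (ZMod 2) W hW
  have hli : LinearIndependent (ZMod 2) (fun i => (e i : E3)) :=
    e.linearIndependent.map' W.subtype W.ker_subtype
  refine ⟨e 0, e 1, hli.ne_zero 0, hli.ne_zero 1,
    fun h => absurd (hli.injective h) (by decide), ?_⟩
  have h := congrArg (Submodule.map W.subtype) e.span_eq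
  rw [Submodule.map_span, Submodule.map_top, Submodule.range_subtype] at h
  refine h.symm.trans (congrArg _ ?_)
  ext x
  simp [Fin.exists_fin_two, eq_comm]

lemma finrank_span_pair_two {a b : E3} (ha : a ≠ 0) (hb : b ≠ 0) (hab : a ≠ b) :
    Module.finrank (ZMod 2) (span (ZMod 2) {a, b}) = 2 := by
  have h2 (c : ZMod 2) : c = 0 ∨ c = 1 := by revert c; decide
  have hli : LinearIndependent (ZMod 2) ![a, b] := by
    rw [LinearIndependent.pair_iff]
    intro s t h
    rcases h2 s with rfl | rfl <;> rcases h2 t with rfl | rfl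
    · simp
    · simp [hb] at h
    · simp [ha] at h
    · simp [add_ne_zero_of_ne hab] at h
  have := finrank_span_eq_card hli
  rwa [Matrix.range_cons_cons_empty, Fintype.card_fin] at this

lemma span_pair_nonzero {a b : E3} (ha : a ≠ 0) (hb : b ≠ 0) (hab : a ≠ b) :
    {x : E3 | x ∈ span (ZMod 2) {a, b} ∧ x ≠ 0} = {a, b, a + b} := by
  have := add_ne_zero_of_ne hab
  ext x
  simp only [mem_span_pair_two, Set.mem_ofPred_eq, Set.mem_insert_iff, Set.mem_singleton_iff]
  constructor
  · tauto
  · rintro (rfl | rfl | rfl) <;> simp [*]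

/-! ### The correspondence between planes and partitions -/

lemma exists_partition {W : Submodule (ZMod 2) E3} (hW : Module.finrank (ZMod 2) W = 2)
    (h2 : ∀ x ∈ W, x ≠ 0 → ¬ hasRep 2 x) :
    ∃ P, IsPairPartition P ∧ {x : E3 | x ∈ W ∧ x ≠ 0} = pairClasses P := by
  obtain ⟨a, b, ha, hb, hab, rfl⟩ := exists_basis_plane hW
  have hs := add_ne_zero_of_ne hab
  have h2s := h2 _ (mem_span_pair_two.2 (by simp)) hs
  obtain ⟨S, hS, rfl⟩ := exists_cls_four ha (h2 _ (mem_span_pair_two.2 (by simp)) ha)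
  obtain ⟨T, hT, rfl⟩ := exists_cls_four hb (h2 _ (mem_span_pair_two.2 (by simp)) hb)
  have hQ := isQuad_of_card_inter hS hT (card_inter hS hT hs h2s)
  refine ⟨_, hQ.isPairPartition, ?_⟩
  have eS : S ∩ T ∪ S \ T = S := by ext; simp; tauto
  have eT : S ∩ T ∪ T \ S = T := by ext; simp; tauto
  rw [span_pair_nonzero ha hb hab, hQ.pairClasses_eq, ← hQ.cls_add_cls, eS, eT]

lemma exists_plane {P : Finset (Finset (Fin 8))} (hP : IsPairPartition P) :
    ∃ W : Submodule (ZMod 2) E3, Module.finrank (ZMod 2) W = 2 ∧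
      (∀ x ∈ W, x ≠ 0 → ¬ hasRep 2 x) ∧ {x : E3 | x ∈ W ∧ x ≠ 0} = pairClasses P := by
  obtain ⟨A, B, C, D, rfl, h⟩ := hP.exists_quad
  -- A class represented by a 4-element set has only 4-element representatives.
  have key {S : Finset (Fin 8)} (hS : S.card = 4) : cls S ≠ 0 ∧ ¬ hasRep 2 (cls S) := by
    have eS : Even S.card := by rw [hS]; decide
    constructor
    · rw [Ne, cls_eq_zero eS]
      rintro (rfl | rfl) <;> simp at hS
    · rintro ⟨T, hT, hTS⟩
      rcases (cls_eq_cls (by rw [hT]; decide) eS).1 hTS with rfl | rfl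
      · omega
      · rw [card_compl, hS] at hT
        simp at hT
  have k1 := key h.cUnion
  have k2 := key h.swapBC.cUnion
  have k3 := key h.swapBD.cUnion
  have hne : cls (A ∪ B) ≠ cls (A ∪ C) := by
    intro he
    apply k3.1
    rw [← h.cls_add_cls, he, ZModModule.add_self]
  have hset : {x : E3 | x ∈ span (ZMod 2) {cls (A ∪ B), cls (A ∪ C)} ∧ x ≠ 0} =
      pairClasses {A, B, C, D} := by
    rw [span_pair_nonzero k1.1 k2.1 hne, h.pairClasses_eq, h.cls_add_cls]
  refine ⟨_, finrank_span_pair_two k1.1 k2.1 hne, fun x hx h0 => ?_, hset⟩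
  have hx' : x ∈ pairClasses {A, B, C, D} := hset ▸ ⟨hx, h0⟩
  rw [h.pairClasses_eq] at hx'
  rcases hx' with rfl | rfl | rfl
  exacts [k1.2, k2.2, k3.2]

/-- The blocks of `P` are recovered from `pairClasses P` as the 2-element sets not separated by
any 4-element set whose class lies in `pairClasses P`. -/
lemma mem_iff_of_isPairPartition {P : Finset (Finset (Fin 8))} (hP : IsPairPartition P)
    (X : Finset (Fin 8)) :
    X ∈ P ↔ X.card = 2 ∧ ∀ S : Finset (Fin 8), S.card = 4 → cls S ∈ pairClasses P →
      X ⊆ S ∨ Disjoint X S := by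
  obtain ⟨h4, h2, hd, hs⟩ := hP
  have cU {Y Z} (hY : Y ∈ P) (hZ : Z ∈ P) (h : Y ≠ Z) : (Y ∪ Z).card = 4 := by
    rw [card_union_of_disjoint (hd _ hY _ hZ h), h2 _ hY, h2 _ hZ]
  constructor
  · refine fun hX => ⟨h2 X hX, ?_⟩
    rintro S hS ⟨Y, hY, Z, hZ, hne, he⟩
    have hc := cU hY hZ hne
    have hXU : X ⊆ Y ∪ Z ∨ Disjoint X (Y ∪ Z) := by
      by_cases hXY : X = Y
      · left; rw [hXY]; exact subset_union_left
      by_cases hXZ : X = Z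
      · left; rw [hXZ]; exact subset_union_right
      right
      rw [disjoint_union_right]
      exact ⟨hd _ hX _ hY hXY, hd _ hX _ hZ hXZ⟩
    rcases (cls_eq_cls (by rw [hS]; decide) (by rw [hc]; decide)).1 he with rfl | rfl
    · exact hXU
    · rw [Finset.subset_compl_iff_disjoint_right, disjoint_compl_right_iff]
      exact hXU.symm
  · rintro ⟨hX, hsep⟩
    obtain ⟨x, y, hxy, rfl⟩ := card_eq_two.1 hX
    have hcov (i : Fin 8) : ∃ Y ∈ P, i ∈ Y := by
      have hi : i ∈ P.sup id := hs ▸ Finset.mem_univ i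
      simpa [Finset.mem_sup] using hi
    obtain ⟨Y, hY, hxY⟩ := hcov x
    obtain ⟨Z, hZ, hyZ⟩ := hcov y
    by_cases hYZ : Y = Z
    · subst hYZ
      have : {x, y} = Y := eq_of_subset_of_card_le (by
        simp [Finset.insert_subset_iff, hxY, hyZ]) (by rw [h2 _ hY, hX])
      exact this ▸ hY
    · -- A third block `V` gives a union `Y ∪ V` containing `x` but not `y`.
      obtain ⟨V, hV, hVn⟩ : ∃ V ∈ P, V ∉ ({Y, Z} : Finset (Finset (Fin 8))) :=
        exists_mem_notMem_of_card_lt_card (by rw [h4]; exact card_le_two.trans_lt (by decide))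
      simp only [mem_insert, Finset.mem_singleton, not_or] at hVn
      have hne : Y ≠ V := fun h => hVn.1 h.symm
      have hyY : y ∉ Y := Finset.disjoint_right.1 (hd _ hY _ hZ hYZ) hyZ
      have hyV : y ∉ V := Finset.disjoint_right.1 (hd _ hV _ hZ hVn.2) hyZ
      rcases hsep (Y ∪ V) (cU hY hV hne) ⟨Y, hY, V, hV, hne, rfl⟩ with h | h
      · have := h (show y ∈ {x, y} by simp)
        simp [hyY, hyV] at this
      · have := Finset.disjoint_left.1 h (show x ∈ {x, y} by simp)
        simp [hxY] at this

lemma pairClasses_injOn {P Q : Finset (Finset (Fin 8))} (hP : IsPairPartition P)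
    (hQ : IsPairPartition Q) (h : pairClasses P = pairClasses Q) : P = Q := by
  ext X
  rw [mem_iff_of_isPairPartition hP, mem_iff_of_isPairPartition hQ, h]

lemma existsUnique_partition {W : Submodule (ZMod 2) E3} (hW : Module.finrank (ZMod 2) W = 2)
    (h2 : ∀ x ∈ W, x ≠ 0 → ¬ hasRep 2 x) :
    ∃! P, IsPairPartition P ∧ {x : E3 | x ∈ W ∧ x ≠ 0} = pairClasses P := by
  obtain ⟨P, hP, h⟩ := exists_partition hW h2
  exact ⟨P, ⟨hP, h⟩, fun Q hQ => pairClasses_injOn hQ.1 hP (hQ.2.symm.trans h)⟩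

lemma plane_ext {W W' : Submodule (ZMod 2) E3}
    (h : {x : E3 | x ∈ W ∧ x ≠ 0} = {x : E3 | x ∈ W' ∧ x ≠ 0}) : W = W' := by
  ext x
  by_cases hx : x = 0
  · simp [hx]
  · simpa [hx] using Set.ext_iff.1 h x

/-- Sending a plane to its partition is injective because a plane is determined by its nonzero
vectors, and surjective because every partition comes from a plane. -/
lemma card_planes : Nat.card {W : Submodule (ZMod 2) E3 //
      Module.finrank (ZMod 2) W = 2 ∧ ∀ x ∈ W, x ≠ 0 → ¬ hasRep 2 x} =
    Nat.card {P : Finset (Finset (Fin 8)) // IsPairPartition P} := by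
  choose f hf hfW using fun W : {W : Submodule (ZMod 2) E3 //
    Module.finrank (ZMod 2) W = 2 ∧ ∀ x ∈ W, x ≠ 0 → ¬ hasRep 2 x} =>
      exists_partition W.2.1 W.2.2
  refine Nat.card_eq_of_bijective (fun W => ⟨f W, hf W⟩) ⟨fun W W' h => ?_, fun P => ?_⟩
  · refine Subtype.ext (plane_ext ?_)
    have h' : f W = f W' := congrArg Subtype.val h
    rw [hfW W, hfW W', h']
  · obtain ⟨W, hW, h2, h⟩ := exists_plane P.2
    exact ⟨⟨W, hW, h2⟩, Subtype.ext <|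
      pairClasses_injOn (hf _) P.2 ((hfW ⟨W, hW, h2⟩).symm.trans h)⟩

/-! ### Counting the partitions into pairs -/

/-- The perfect matchings of a finite set `s`: partitions of `s` into 2-element blocks. -/
def matchings (s : Finset (Fin 8)) : Finset (Finset (Finset (Fin 8))) :=
  {P ∈ (s.powersetCard 2).powerset |
    (∀ B₁ ∈ P, ∀ B₂ ∈ P, B₁ ≠ B₂ → Disjoint B₁ B₂) ∧ P.sup id = s}

lemma mem_matchings {s : Finset (Fin 8)} {P : Finset (Finset (Fin 8))} :
    P ∈ matchings s ↔ (∀ B ∈ P, B.card = 2) ∧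
      (∀ B₁ ∈ P, ∀ B₂ ∈ P, B₁ ≠ B₂ → Disjoint B₁ B₂) ∧ P.sup id = s := by
  simp only [matchings, Finset.mem_filter, Finset.mem_powerset, Finset.subset_iff,
    Finset.mem_powersetCard]
  constructor
  · rintro ⟨h1, h2, h3⟩
    exact ⟨fun B hB => (h1 hB).2, h2, h3⟩
  · rintro ⟨h1, h2, rfl⟩
    exact ⟨fun B hB => ⟨fun i hi => (Finset.le_sup (f := id) hB) hi, h1 B hB⟩, h2, rfl⟩

/-- A matching of `s` amounts to a partner `b` of `a` and a matching of the remaining points. -/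
lemma matchings_eq_biUnion {s : Finset (Fin 8)} {a : Fin 8} (ha : a ∈ s) :
    matchings s = (s.erase a).biUnion fun b =>
      (matchings ((s.erase a).erase b)).image (insert {a, b}) := by
  ext P
  simp only [Finset.mem_biUnion, Finset.mem_image, Finset.mem_erase]
  constructor
  · intro hP
    obtain ⟨h2, hd, hs⟩ := mem_matchings.1 hP
    obtain ⟨Y, hY, haY⟩ : ∃ Y ∈ P, a ∈ Y := by
      rw [← hs] at ha
      simpa [Finset.mem_sup] using ha
    obtain ⟨b, hab, rfl⟩ : ∃ b, a ≠ b ∧ Y = {a, b} := by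
      obtain ⟨x, y, hxy, rfl⟩ := card_eq_two.1 (h2 Y hY)
      simp only [mem_insert, Finset.mem_singleton] at haY
      rcases haY with rfl | rfl
      · exact ⟨y, hxy, rfl⟩
      · exact ⟨x, hxy.symm, Finset.pair_comm _ _⟩
    have hbs : b ∈ s := by
      rw [← hs, Finset.mem_sup]
      exact ⟨_, hY, by simp⟩
    refine ⟨b, ⟨hab.symm, hbs⟩, P.erase {a, b}, ?_, insert_erase hY⟩
    refine mem_matchings.2 ⟨fun B hB => h2 B (mem_of_mem_erase hB), fun B hB B' hB' =>
      hd B (mem_of_mem_erase hB) B' (mem_of_mem_erase hB'), ?_⟩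
    ext i
    simp only [Finset.mem_sup, Finset.mem_erase, id]
    constructor
    · rintro ⟨Z, ⟨hZ, hZP⟩, hi⟩
      have := Finset.disjoint_left.1 (hd Z hZP _ hY hZ) hi
      simp only [mem_insert, Finset.mem_singleton, not_or] at this
      refine ⟨this.2, this.1, ?_⟩
      rw [← hs, Finset.mem_sup]
      exact ⟨Z, hZP, hi⟩
    · rintro ⟨hib, hia, his⟩
      rw [← hs, Finset.mem_sup] at his
      obtain ⟨Z, hZP, hi⟩ := his
      refine ⟨Z, ⟨?_, hZP⟩, hi⟩
      rintro rfl
      simp [hia, hib] at hi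
  · rintro ⟨b, ⟨hba, hbs⟩, Q, hQ, rfl⟩
    obtain ⟨h2, hd, hs⟩ := mem_matchings.1 hQ
    have hdis (Z) (hZ : Z ∈ Q) : Disjoint {a, b} Z := by
      have hZs : Z ⊆ (s.erase a).erase b := hs ▸ Finset.le_sup (f := id) hZ
      refine Finset.disjoint_right.2 fun i hi => ?_
      have := hZs hi
      simp only [Finset.mem_erase] at this
      simp [this.1, this.2.1]
    refine mem_matchings.2 ⟨?_, ?_, ?_⟩
    · simp only [Finset.forall_mem_insert]
      exact ⟨card_pair hba.symm, h2⟩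
    · intro B hB B' hB' hne
      rcases mem_insert.1 hB with rfl | hB <;> rcases mem_insert.1 hB' with rfl | hB'
      · exact absurd rfl hne
      · exact hdis _ hB'
      · exact (hdis _ hB).symm
      · exact hd _ hB _ hB' hne
    · rw [sup_insert, hs]
      ext i
      simp only [id, sup_eq_union, Finset.mem_union, mem_insert, Finset.mem_singleton,
        Finset.mem_erase]
      constructor
      · rintro ((rfl | rfl) | h)
        exacts [ha, hbs, h.2.2]
      · tauto

lemma notMem_of_mem_matchings {s : Finset (Fin 8)} {a : Fin 8} (ha : a ∉ s)
    {Q : Finset (Finset (Fin 8))} (hQ : Q ∈ matchings s) {Z : Finset (Fin 8)} (haZ : a ∈ Z) :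
    Z ∉ Q := fun hZ =>
  ha ((mem_matchings.1 hQ).2.2 ▸ Finset.mem_sup.2 ⟨Z, hZ, haZ⟩)

lemma card_matchings_succ {s : Finset (Fin 8)} {a : Fin 8} (ha : a ∈ s) :
    (matchings s).card = ∑ b ∈ s.erase a, (matchings ((s.erase a).erase b)).card := by
  rw [matchings_eq_biUnion ha, card_biUnion]
  · refine Finset.sum_congr rfl fun b _ => card_image_of_injOn fun Q hQ Q' hQ' h => ?_
    have n (R) (hR : R ∈ matchings ((s.erase a).erase b)) : ({a, b} : Finset (Fin 8)) ∉ R :=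
      notMem_of_mem_matchings (a := a) (by simp) hR (by simp)
    rw [← erase_insert (n Q hQ), ← erase_insert (n Q' hQ')]
    exact congrArg (fun R => R.erase {a, b}) h
  · intro b hb c hc hbc
    refine Finset.disjoint_left.2 fun P hP hP' => hbc ?_
    obtain ⟨Q, hQ, rfl⟩ := Finset.mem_image.1 hP
    obtain ⟨Q', hQ', he⟩ := Finset.mem_image.1 hP'
    have hm : ({a, c} : Finset (Fin 8)) ∈ insert {a, b} Q := he ▸ mem_insert_self _ _
    have hn : ({a, c} : Finset (Fin 8)) ∉ Q :=
      notMem_of_mem_matchings (a := a) (by simp) hQ (by simp)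
    have h : ({a, c} : Finset (Fin 8)) = {a, b} := (mem_insert.1 hm).resolve_right hn
    have hbm : b ∈ ({a, c} : Finset (Fin 8)) := h ▸ by simp
    simp only [mem_insert, Finset.mem_singleton] at hbm
    exact hbm.resolve_left (Finset.ne_of_mem_erase hb)

lemma card_matchings (n : ℕ) (s : Finset (Fin 8)) (hs : s.card = 2 * n) :
    (matchings s).card = ∏ k ∈ range n, (2 * k + 1) := by
  induction n generalizing s with
  | zero =>
    obtain rfl : s = ∅ := card_eq_zero.1 hs
    refine card_eq_one.2 ⟨∅, Finset.ext fun P => ?_⟩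
    rw [mem_matchings, Finset.mem_singleton]
    constructor
    · rintro ⟨h2, -, h⟩
      refine Finset.eq_empty_iff_forall_notMem.2 fun B hB => ?_
      have hB0 : B ⊆ ∅ := h ▸ Finset.le_sup (f := id) hB
      have := h2 B hB
      rw [Finset.subset_empty.1 hB0] at this
      simp at this
    · rintro rfl
      simp
  | succ n ih =>
    obtain ⟨a, ha⟩ : s.Nonempty := card_pos.1 (by omega)
    have hc : (s.erase a).card = 2 * n + 1 := by rw [card_erase_of_mem ha]; omega
    rw [card_matchings_succ ha, prod_range_succ, Finset.sum_congr rfl fun b hb =>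
      ih _ (by rw [card_erase_of_mem hb]; omega), sum_const, hc, smul_eq_mul, mul_comm]

lemma isPairPartition_iff {P : Finset (Finset (Fin 8))} :
    IsPairPartition P ↔ P ∈ matchings univ := by
  rw [mem_matchings]
  refine ⟨fun h => h.2, fun h => ⟨?_, h⟩⟩
  obtain ⟨h2, hd, hs⟩ := h
  -- Four is forced: the `P.card` blocks of size two fill the eight points.
  have h8 : (P.sup id).card = 8 := by rw [hs]; rfl
  rw [sup_eq_biUnion, card_biUnion (t := id) hd] at h8
  have h2P : ∑ B ∈ P, (id B).card = P.card * 2 := Finset.sum_const_nat h2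
  omega

lemma card_pairPartitions :
    Nat.card {P : Finset (Finset (Fin 8)) // IsPairPartition P} = 105 := by
  rw [Nat.card_congr (Equiv.subtypeEquivRight fun _ => isPairPartition_iff),
    Nat.card_eq_fintype_card, Fintype.card_coe, card_matchings 4 univ rfl]
  rfl

/-- a 2-dimensional subspace `W ⊆ E₃` none of whose nonzero elements
has a 2-element representative determines a unique partition of `I` into four pairs
`P₁,…,P₄` whose pairwise unions' classes `[Pᵢ ∪ Pⱼ]` are exactly the nonzero elements
of `W`; conversely every such partition determines such a subspace.  Hence these
subspaces (type II.1) are in bijection with the 105 partitions of an 8-element set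
into four pairs. -/
theorem statement12 :
    (∀ W : Submodule (ZMod 2) E3, Module.finrank (ZMod 2) W = 2 →
      (∀ x ∈ W, x ≠ 0 → ¬ hasRep 2 x) →
      ∃! P : Finset (Finset (Fin 8)), IsPairPartition P ∧
        {x : E3 | x ∈ W ∧ x ≠ 0} =
          {x : E3 | ∃ B₁ ∈ P, ∃ B₂ ∈ P, B₁ ≠ B₂ ∧ x = cls (B₁ ∪ B₂)}) ∧
    (∀ P : Finset (Finset (Fin 8)), IsPairPartition P →
      ∃ W : Submodule (ZMod 2) E3, Module.finrank (ZMod 2) W = 2 ∧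
        (∀ x ∈ W, x ≠ 0 → ¬ hasRep 2 x) ∧
        {x : E3 | x ∈ W ∧ x ≠ 0} =
          {x : E3 | ∃ B₁ ∈ P, ∃ B₂ ∈ P, B₁ ≠ B₂ ∧ x = cls (B₁ ∪ B₂)}) ∧
    Nat.card {P : Finset (Finset (Fin 8)) // IsPairPartition P} = 105 ∧
    Nat.card {W : Submodule (ZMod 2) E3 //
      Module.finrank (ZMod 2) W = 2 ∧ ∀ x ∈ W, x ≠ 0 → ¬ hasRep 2 x} = 105 := by
  refine ⟨fun W hW h2 => existsUnique_partition hW h2, fun P hP => exists_plane hP,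
    card_pairPartitions, ?_⟩
  rw [card_planes, card_pairPartitions]

end
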